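/- Let I = J + K be a Betti splitting of a monomial ideal I, i.e., the minimal generating set of I is the disjoint union of those of J and K, and β_{i,j}(I) = β_{i,j}(J) + β_{i,j}(K) + β_{i-1,j}(J∩K) for all i,j ≥ 0 (with β_{-1,j} = 0). Then reg(I) = max{reg(J), reg(K), reg(J∩K) − 1}. -/

import Mathlib

open MvPolynomial

noncomputable section

namespace PaperReg

variable (k : Type) [Field k] (σ : Type)

/-- A graded free resolution of a homogeneous ideal `I` of `MvPolynomial σ k`:
finite-rank free modules `Fin (rk i) →₀ S` with basis elements of degrees `deg i`,
degree-preserving differentials, exact, augmented onto `I`. -/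
structure GradedFreeRes (I : Ideal (MvPolynomial σ k)) where
  rk : ℕ → ℕ
  deg : (i : ℕ) → Fin (rk i) → ℕ
  aug : (Fin (rk 0) →₀ MvPolynomial σ k) →ₗ[MvPolynomial σ k] MvPolynomial σ k
  d : (i : ℕ) →
    ((Fin (rk (i + 1)) →₀ MvPolynomial σ k) →ₗ[MvPolynomial σ k] (Fin (rk i) →₀ MvPolynomial σ k))
  aug_range : LinearMap.range aug = I
  exact_zero : LinearMap.range (d 0) = LinearMap.ker aug
  exact_succ : ∀ i, LinearMap.range (d (i + 1)) = LinearMap.ker (d i)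
  aug_graded : ∀ b, (aug (Finsupp.single b 1)).IsHomogeneous (deg 0 b)
  d_graded : ∀ i b c, (d i (Finsupp.single b 1)) c = 0 ∨
    ∃ m, deg (i + 1) b = deg i c + m ∧ ((d i (Finsupp.single b 1)) c).IsHomogeneous m

/-- The `(i,j)`-th graded Betti number of `I`: the minimal number of degree-`j` basis
elements in homological position `i`, over all graded free resolutions of `I`
(achieved by the minimal graded free resolution). -/
def betti (I : Ideal (MvPolynomial σ k)) (i j : ℕ) : ℕ :=
  sInf { r | ∃ F : GradedFreeRes k σ I,
    r = (Finset.univ.filter (fun b => F.deg i b = j)).card }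

/-- Castelnuovo–Mumford regularity: `reg I = max { j - i | betti I i j ≠ 0 }`. -/
def reg (I : Ideal (MvPolynomial σ k)) : ℕ :=
  sSup { r | ∃ i j : ℕ, betti k σ I i j ≠ 0 ∧ r = j - i }

/-- The monic monomial with exponent vector `a`. -/
def mon (a : σ →₀ ℕ) : MvPolynomial σ k := monomial a 1

/-- `I` is a monomial ideal. -/
def IsMonomialIdeal (I : Ideal (MvPolynomial σ k)) : Prop :=
  ∃ A : Set (σ →₀ ℕ), I = Ideal.span (mon k σ '' A)

/-- The exponent vectors of the unique minimal set of monomial generators of a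
monomial ideal: monomials of `I` minimal with respect to divisibility. -/
def minGens (I : Ideal (MvPolynomial σ k)) : Set (σ →₀ ℕ) :=
  { a | mon k σ a ∈ I ∧ ∀ b : σ →₀ ℕ, mon k σ b ∈ I → b ≤ a → b = a }

/-- The support of a monomial ideal: variables appearing in its minimal generators. -/
def isupp (I : Ideal (MvPolynomial σ k)) : Set σ :=
  ⋃ a ∈ minGens k σ I, ↑a.support

/-! A multigraded map of free modules over `R[x]` is a matrix of constants once all variables are
set to `1`: each of its strands is the restriction of that matrix to the basis elements whose
degree divides the strand's. Its kernel therefore consists of the vectors whose strands lie in a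
fixed submodule `W` of constant vectors. For each set `T` of basis elements choose finitely many
generators of the vectors in `W` supported on `T`; homogenizing each of them in the lcm of the
degrees it involves yields finitely many generators of the kernel. Iterating, a finitely generated
monomial ideal has a free resolution all of whose multidegrees divide the lcm of the generators.
Hence the numbers `j - i` with `β_{i,j} ≠ 0` are bounded, the supremum defining `reg` is finite,
and the splitting of the Betti numbers can be read off upper bound by upper bound; the shift
`i - 1` on `J ∩ K` produces the `-1`. -/

section Strands

variable {R ι τ : Type*} [CommSemiring R]

/-- The strand in multidegree `c` of the free module on basis elements of multidegrees `m b`,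
written as a vector of constants: `x ^ (c - m b) • e_b` is recorded as `e_b`. Multiplying the
coordinate by `x ^ m b` makes it vanish at `b` unless `m b ≤ c`. -/
def strand (m : ι → τ →₀ ℕ) (c : τ →₀ ℕ) : (ι →₀ MvPolynomial τ R) →ₗ[R] (ι →₀ R) :=
  Finsupp.lsum R fun b =>
    Finsupp.lsingle b ∘ₗ lcoeff R c ∘ₗ LinearMap.mulLeft R (monomial (m b) 1)

/-- The element of multidegree `c` with given vector of constants, `e_b ↦ x ^ (c - m b) • e_b`;
meaningful only on vectors supported where `m b ≤ c`, because of the truncated subtraction. -/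
def homogenize (m : ι → τ →₀ ℕ) (c : τ →₀ ℕ) : (ι →₀ R) →ₗ[R] (ι →₀ MvPolynomial τ R) :=
  Finsupp.lsum R fun b => Finsupp.lsingle b ∘ₗ monomial (c - m b)

@[simp]
lemma strand_single (m : ι → τ →₀ ℕ) (c : τ →₀ ℕ) (b : ι) (p : MvPolynomial τ R) :
    strand m c (Finsupp.single b p) = Finsupp.single b (coeff c (monomial (m b) 1 * p)) := by
  simp [strand]

lemma strand_apply (m : ι → τ →₀ ℕ) (c : τ →₀ ℕ) (x : ι →₀ MvPolynomial τ R) (b : ι) :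
    strand m c x b = coeff c (monomial (m b) 1 * x b) := by
  induction x using Finsupp.induction_linear with
  | zero => simp
  | add x y hx hy => simp [hx, hy, mul_add]
  | single a p =>
    obtain rfl | hab := eq_or_ne a b
    · simp
    · simp [hab]

lemma homogenize_apply (m : ι → τ →₀ ℕ) (c : τ →₀ ℕ) (v : ι →₀ R) (b : ι) :
    homogenize m c v b = monomial (c - m b) (v b) := by
  induction v using Finsupp.induction_linear with
  | zero => simp
  | add v w hv hw => simp [hv, hw]
  | single a r =>
    obtain rfl | hab := eq_or_ne a b
    · simp [homogenize]
    · simp [homogenize, hab]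

lemma le_of_mem_support_strand {m : ι → τ →₀ ℕ} {c : τ →₀ ℕ} {x : ι →₀ MvPolynomial τ R} {b : ι}
    (hb : b ∈ (strand m c x).support) : m b ≤ c := by
  by_contra hbc
  exact Finsupp.mem_support_iff.1 hb (by rw [strand_apply, coeff_monomial_mul', if_neg hbc])

lemma eq_of_forall_strand_eq {m : ι → τ →₀ ℕ} {x y : ι →₀ MvPolynomial τ R}
    (h : ∀ c, strand m c x = strand m c y) : x = y := by
  ext b e
  simpa [strand_apply, coeff_monomial_mul] using DFunLike.congr_fun (h (m b + e)) b

lemma exists_forall_notMem_strand_eq_zero (m : ι → τ →₀ ℕ) (x : ι →₀ MvPolynomial τ R) :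
    ∃ A : Finset (τ →₀ ℕ), ∀ c ∉ A, strand m c x = 0 := by
  classical
  refine ⟨x.support.biUnion fun b => (monomial (m b) 1 * x b).support, fun c hc => ?_⟩
  ext b
  rw [strand_apply, Finsupp.zero_apply]
  by_contra hne
  refine hc (Finset.mem_biUnion.2 ⟨b, Finsupp.mem_support_iff.2 fun hb => ?_,
    mem_support_iff.2 hne⟩)
  exact hne (by rw [hb, mul_zero, coeff_zero])

lemma strand_smul_homogenize {m : ι → τ →₀ ℕ} {l : τ →₀ ℕ} {v : ι →₀ R}
    (hv : ∀ b ∈ v.support, m b ≤ l) (c : τ →₀ ℕ) (p : MvPolynomial τ R) :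
    strand m c (p • homogenize m l v) = coeff c (monomial l 1 * p) • v := by
  ext b
  rw [strand_apply, Finsupp.smul_apply, Finsupp.smul_apply, homogenize_apply, smul_eq_mul,
    smul_eq_mul]
  by_cases hb : v b = 0
  · simp [hb]
  · have hbl : m b + (l - m b) = l := add_tsub_cancel_of_le (hv b (Finsupp.mem_support_iff.2 hb))
    calc coeff c (monomial (m b) 1 * (p * monomial (l - m b) (v b)))
        = coeff c (C (v b) * (monomial l 1 * p)) := by
          rw [mul_left_comm, monomial_mul, hbl, one_mul, ← mul_assoc, C_mul_monomial, mul_one,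
            mul_comm]
      _ = coeff c (monomial l 1 * p) * v b := by rw [coeff_C_mul, mul_comm]

lemma strand_homogenize [DecidableEq τ] {m : ι → τ →₀ ℕ} {l : τ →₀ ℕ} {v : ι →₀ R}
    (hv : ∀ b ∈ v.support, m b ≤ l) (c : τ →₀ ℕ) :
    strand m c (homogenize m l v) = if l = c then v else 0 := by
  simpa [coeff_monomial, ite_smul] using strand_smul_homogenize hv c 1

lemma exists_eq_sum_homogenize_strand (m : ι → τ →₀ ℕ) (x : ι →₀ MvPolynomial τ R) :
    ∃ A : Finset (τ →₀ ℕ), x = ∑ c ∈ A, homogenize m c (strand m c x) := by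
  classical
  obtain ⟨A, hA⟩ := exists_forall_notMem_strand_eq_zero m x
  refine ⟨A, eq_of_forall_strand_eq (m := m) fun c => ?_⟩
  simp only [map_sum, strand_homogenize fun _ => le_of_mem_support_strand, Finset.sum_ite_eq']
  split_ifs with hc
  · rfl
  · exact hA c hc

lemma homogenize_eq_monomial_smul {m : ι → τ →₀ ℕ} {l c : τ →₀ ℕ} {v : ι →₀ R}
    (hv : ∀ b ∈ v.support, m b ≤ l) (hlc : l ≤ c) :
    homogenize m c v = monomial (c - l) (1 : R) • homogenize m l v := by
  ext1 b
  rw [Finsupp.smul_apply, homogenize_apply, homogenize_apply, smul_eq_mul, monomial_mul, one_mul]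
  by_cases hb : v b = 0
  · simp [hb]
  · rw [tsub_add_tsub_cancel hlc (hv b (Finsupp.mem_support_iff.2 hb))]

end Strands

section LcmDegree

variable {R ι τ : Type*} [Zero R]

/-- The smallest multidegree in which the vector of constants `v` can be homogenized: the lcm of
the degrees of the basis elements occurring in `v`. -/
def lcmDegree (m : ι → τ →₀ ℕ) (v : ι →₀ R) : τ →₀ ℕ :=
  v.support.sup m

lemma le_lcmDegree (m : ι → τ →₀ ℕ) (v : ι →₀ R) : ∀ b ∈ v.support, m b ≤ lcmDegree m v :=
  fun _ => Finset.le_sup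

lemma lcmDegree_le {m : ι → τ →₀ ℕ} {v : ι →₀ R} {c : τ →₀ ℕ} (h : ∀ b ∈ v.support, m b ≤ c) :
    lcmDegree m v ≤ c :=
  Finset.sup_le h

end LcmDegree

/-- The family `v` generates `W` supportwise: it lies in `W`, and every element of `W` is a
combination of those `v b` that involve no further basis elements. This is what generation of `W`
has to be strengthened to in order to survive homogenization. -/
structure GeneratesSupportwise {R ι κ : Type*} [Semiring R] (v : κ → ι →₀ R)
    (W : Submodule R (ι →₀ R)) : Prop where
  mem : ∀ b, v b ∈ W
  mem_span : ∀ w ∈ W, w ∈ Submodule.span R (v '' {b | (v b).support ⊆ w.support})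

lemma exists_fin_generatesSupportwise {R ι : Type*} [Ring R] [IsNoetherianRing R] [Finite ι]
    (W : Submodule R (ι →₀ R)) :
    ∃ (n : ℕ) (v : Fin n → ι →₀ R), GeneratesSupportwise v W := by
  classical
  have := Fintype.ofFinite ι
  choose G hG using fun T : Finset ι =>
    IsNoetherian.noetherian (W ⊓ Finsupp.supported R R (T : Set ι))
  have hGW (T : Finset ι) {w : ι →₀ R} (hw : w ∈ G T) : w ∈ W ∧ w.support ⊆ T := by
    have h : w ∈ W ⊓ Finsupp.supported R R (T : Set ι) := hG T ▸ Submodule.subset_span hw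
    exact ⟨h.1, by simpa [Finsupp.mem_supported] using h.2⟩
  let U : Finset (ι →₀ R) := Finset.univ.biUnion G
  refine ⟨U.card, fun i => U.equivFin.symm i, fun i => ?_, fun w hw => ?_⟩
  · obtain ⟨T, -, hT⟩ := Finset.mem_biUnion.1 (U.equivFin.symm i).2
    exact (hGW T hT).1
  · have hw' : w ∈ Submodule.span R (G w.support : Set (ι →₀ R)) := by
      rw [hG]
      exact ⟨hw, Finsupp.mem_supported_support R w⟩
    refine Submodule.span_mono (fun g hg => ?_) hw'
    have hgU : g ∈ U := Finset.mem_biUnion.2 ⟨w.support, Finset.mem_univ _, hg⟩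
    exact ⟨U.equivFin ⟨g, hgU⟩, by simpa using (hGW _ hg).2, by simp⟩

section HomogenizedMaps

variable {R ι κ τ : Type*} [CommSemiring R]

/-- The multigraded map whose columns are the homogenizations of the constant vectors `v b`, each
in its smallest possible degree. -/
def homogenizedMap (m : ι → τ →₀ ℕ) (v : κ → ι →₀ R) :
    (κ →₀ MvPolynomial τ R) →ₗ[MvPolynomial τ R] (ι →₀ MvPolynomial τ R) :=
  Finsupp.linearCombination _ fun b => homogenize m (lcmDegree m (v b)) (v b)

lemma homogenizedMap_single_one (m : ι → τ →₀ ℕ) (v : κ → ι →₀ R) (b : κ) :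
    homogenizedMap m v (Finsupp.single b 1) = homogenize m (lcmDegree m (v b)) (v b) := by
  simp [homogenizedMap]

lemma strand_homogenizedMap (m : ι → τ →₀ ℕ) (v : κ → ι →₀ R) (c : τ →₀ ℕ)
    (x : κ →₀ MvPolynomial τ R) :
    strand m c (homogenizedMap m v x) =
      Finsupp.linearCombination R v (strand (fun b => lcmDegree m (v b)) c x) := by
  induction x using Finsupp.induction_linear with
  | zero => simp
  | add x y hx hy => simp only [map_add, hx, hy]
  | single b p =>
    simp [homogenizedMap, strand_smul_homogenize (le_lcmDegree m (v b))]

lemma mem_ker_homogenizedMap_iff {m : ι → τ →₀ ℕ} {v : κ → ι →₀ R} {x : κ →₀ MvPolynomial τ R} :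
    x ∈ LinearMap.ker (homogenizedMap m v) ↔ ∀ c, strand (fun b => lcmDegree m (v b)) c x ∈
      LinearMap.ker (Finsupp.linearCombination R v) := by
  simp only [LinearMap.mem_ker, ← strand_homogenizedMap]
  exact ⟨fun h c => by rw [h, map_zero],
    fun h => eq_of_forall_strand_eq (m := m) fun c => by rw [h, map_zero]⟩

lemma mem_ker_linearCombination_monomial_iff {m : ι → τ →₀ ℕ} {x : ι →₀ MvPolynomial τ R} :
    x ∈ LinearMap.ker (Finsupp.linearCombination (MvPolynomial τ R) fun b => monomial (m b) (1 : R))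
      ↔ ∀ c, strand m c x ∈ LinearMap.ker (Finsupp.linearCombination R fun _ : ι => (1 : R)) := by
  have coeff_eq (c : τ →₀ ℕ) :
      coeff c (Finsupp.linearCombination (MvPolynomial τ R) (fun b => monomial (m b) (1 : R)) x) =
        Finsupp.linearCombination R (fun _ : ι => (1 : R)) (strand m c x) := by
    induction x using Finsupp.induction_linear with
    | zero => simp
    | add x y hx hy => simp only [map_add, coeff_add, hx, hy]
    | single b p => simp [mul_comm]
  simp only [LinearMap.mem_ker, ← coeff_eq, MvPolynomial.ext_iff, coeff_zero]

lemma homogenize_mem_range_homogenizedMap {m : ι → τ →₀ ℕ} {v : κ → ι →₀ R} {c : τ →₀ ℕ}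
    {w : ι →₀ R} (hw : w ∈ Submodule.span R (v '' {b | (v b).support ⊆ w.support}))
    (hc : ∀ b ∈ w.support, m b ≤ c) :
    homogenize m c w ∈ LinearMap.range (homogenizedMap (R := R) m v) := by
  suffices h : Submodule.span R (v '' {b | (v b).support ⊆ w.support}) ≤
      ((LinearMap.range (homogenizedMap m v)).restrictScalars R).comap (homogenize m c) from h hw
  rw [Submodule.span_le]
  rintro _ ⟨b, hb, rfl⟩
  have hbc : lcmDegree m (v b) ≤ c := lcmDegree_le fun a ha => hc a (hb ha)
  refine ⟨monomial (c - lcmDegree m (v b)) (1 : R) • Finsupp.single b 1, ?_⟩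
  rw [map_smul, homogenizedMap_single_one, homogenize_eq_monomial_smul (le_lcmDegree m _) hbc]

lemma GeneratesSupportwise.mem_range_homogenizedMap_iff {m : ι → τ →₀ ℕ} {v : κ → ι →₀ R}
    {W : Submodule R (ι →₀ R)} (hv : GeneratesSupportwise v W) {x : ι →₀ MvPolynomial τ R} :
    x ∈ LinearMap.range (homogenizedMap m v) ↔ ∀ c, strand m c x ∈ W := by
  constructor
  · rintro ⟨y, rfl⟩ c
    rw [strand_homogenizedMap, Finsupp.linearCombination_apply]
    exact W.finsuppSum_mem _ _ _ fun b _ => W.smul_mem _ (hv.mem b)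
  · intro hx
    obtain ⟨A, hA⟩ := exists_eq_sum_homogenize_strand m x
    rw [hA]
    exact Submodule.sum_mem _ fun c _ => homogenize_mem_range_homogenizedMap
      (hv.mem_span _ (hx c)) fun _ => le_of_mem_support_strand

end HomogenizedMaps

/-- A step in the construction of a multigraded free resolution: a free module with basis elements
of multidegrees `deg`, and the submodule `kernel` of constant vectors describing the kernel of the
map out of it, namely the elements all of whose strands lie in `kernel`. -/
structure SyzygyStep (R τ : Type*) [Semiring R] where
  rk : ℕ
  deg : Fin rk → τ →₀ ℕ
  kernel : Submodule R (Fin rk →₀ R)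

namespace SyzygyStep

/-- The step presenting the ideal generated by the monomials `x ^ m b`: the augmentation sends
`e_b` to `x ^ m b`, so all its constants are `1`. -/
def ofMonomials (R : Type*) {τ : Type*} [Semiring R] {n : ℕ} (m : Fin n → τ →₀ ℕ) :
    SyzygyStep R τ where
  rk := n
  deg := m
  kernel := LinearMap.ker (Finsupp.linearCombination R fun _ => (1 : R))

variable {R τ : Type*} [CommRing R] [IsNoetherianRing R]

/-- A chosen supportwise generating family of the kernel; its homogenizations are the columns of
the next differential. -/
def generators (D : SyzygyStep R τ) :
    Fin (exists_fin_generatesSupportwise D.kernel).choose → Fin D.rk →₀ R :=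
  (exists_fin_generatesSupportwise D.kernel).choose_spec.choose

lemma generatesSupportwise_generators (D : SyzygyStep R τ) :
    GeneratesSupportwise D.generators D.kernel :=
  (exists_fin_generatesSupportwise D.kernel).choose_spec.choose_spec

/-- The step that resolves the kernel of `D`. -/
def next (D : SyzygyStep R τ) : SyzygyStep R τ where
  rk := (exists_fin_generatesSupportwise D.kernel).choose
  deg b := lcmDegree D.deg (D.generators b)
  kernel := LinearMap.ker (Finsupp.linearCombination R D.generators)

/-- The multigraded map from the free module of `D.next` onto the kernel described by `D`. -/
def differential (D : SyzygyStep R τ) : (Fin D.next.rk →₀ MvPolynomial τ R) →ₗ[MvPolynomial τ R]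
    (Fin D.rk →₀ MvPolynomial τ R) :=
  homogenizedMap D.deg D.generators

lemma mem_range_differential_iff (D : SyzygyStep R τ) {x : Fin D.rk →₀ MvPolynomial τ R} :
    x ∈ LinearMap.range D.differential ↔ ∀ c, strand D.deg c x ∈ D.kernel :=
  D.generatesSupportwise_generators.mem_range_homogenizedMap_iff

lemma range_differential_next (D : SyzygyStep R τ) :
    LinearMap.range D.next.differential = LinearMap.ker D.differential :=
  Submodule.ext fun _ => D.next.mem_range_differential_iff.trans mem_ker_homogenizedMap_iff.symm

lemma differential_entry_eq_zero_or_isHomogeneous (D : SyzygyStep R τ) (b : Fin D.next.rk)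
    (c : Fin D.rk) :
    D.differential (Finsupp.single b 1) c = 0 ∨
      ∃ m, (D.next.deg b).degree = (D.deg c).degree + m ∧
        (D.differential (Finsupp.single b 1) c).IsHomogeneous m := by
  have hentry : D.differential (Finsupp.single b 1) c =
      monomial (D.next.deg b - D.deg c) (D.generators b c) :=
    (DFunLike.congr_fun (homogenizedMap_single_one D.deg D.generators b) c).trans
      (homogenize_apply ..)
  rw [hentry]
  by_cases hc : D.generators b c = 0
  · exact Or.inl (by rw [hc, monomial_zero])
  · have hle : D.deg c ≤ D.next.deg b := le_lcmDegree _ _ c (Finsupp.mem_support_iff.2 hc)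
    refine Or.inr ⟨(D.next.deg b - D.deg c).degree, ?_, isHomogeneous_monomial _ rfl⟩
    rw [← map_add, add_tsub_cancel_of_le hle]

/-- The `i`-th step of the resolution. It is not `Nat.iterate`, so that step `i + 1` is
definitionally `next` of step `i`, as the types of the differentials require. -/
def iterate (D : SyzygyStep R τ) : ℕ → SyzygyStep R τ
  | 0 => D
  | i + 1 => (D.iterate i).next

lemma iterate_deg_le {D : SyzygyStep R τ} {a : τ →₀ ℕ} (ha : ∀ b, D.deg b ≤ a) (i : ℕ)
    (b : Fin (D.iterate i).rk) : (D.iterate i).deg b ≤ a := by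
  induction i with
  | zero => exact ha b
  | succ i ih => exact lcmDegree_le fun c _ => ih c

end SyzygyStep

section Regularity

variable {k σ}

/-- The free resolution of a monomial ideal obtained by iterating `SyzygyStep.next`, its
multidegrees coarsened to total degrees. -/
def monomialResolution {n : ℕ} (m : Fin n → σ →₀ ℕ) :
    GradedFreeRes k σ (Ideal.span (Set.range fun b => mon k σ (m b))) where
  rk i := ((SyzygyStep.ofMonomials k m).iterate i).rk
  deg i b := (((SyzygyStep.ofMonomials k m).iterate i).deg b).degree
  aug := Finsupp.linearCombination _ fun b : Fin n => mon k σ (m b)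
  d i := ((SyzygyStep.ofMonomials k m).iterate i).differential
  aug_range := Finsupp.range_linearCombination _
  exact_zero := Submodule.ext fun _ => (SyzygyStep.ofMonomials k m).mem_range_differential_iff.trans
    mem_ker_linearCombination_monomial_iff.symm
  exact_succ i := ((SyzygyStep.ofMonomials k m).iterate i).range_differential_next
  aug_graded (b : Fin n) := by
    change (Finsupp.linearCombination _ (fun b => mon k σ (m b)) (Finsupp.single b 1)).IsHomogeneous
      (m b).degree
    rw [Finsupp.linearCombination_single, one_smul]
    exact isHomogeneous_monomial _ rfl
  d_graded i := ((SyzygyStep.ofMonomials k m).iterate i).differential_entry_eq_zero_or_isHomogeneous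

lemma GradedFreeRes.fg {I : Ideal (MvPolynomial σ k)} (F : GradedFreeRes k σ I) : I.FG := by
  rw [← F.aug_range, LinearMap.range_eq_map]
  exact Module.Finite.fg_top.map _

lemma IsMonomialIdeal.exists_eq_span_range {I : Ideal (MvPolynomial σ k)}
    (hI : IsMonomialIdeal k σ I) (hfg : I.FG) :
    ∃ (n : ℕ) (m : Fin n → σ →₀ ℕ), I = Ideal.span (Set.range fun b => mon k σ (m b)) := by
  obtain ⟨A, rfl⟩ := hI
  obtain ⟨s, hsA, hs⟩ := (Submodule.fg_span_iff_fg_span_finset_subset _).1 hfg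
  choose m _ hm using fun b : Fin s.card => hsA (s.equivFin.symm b).2
  refine ⟨s.card, m, ?_⟩
  have hrange : Set.range (fun b => mon k σ (m b)) = s := by
    simp only [hm]
    exact (s.equivFin.symm.surjective.range_comp Subtype.val).trans Subtype.range_coe
  rw [hrange]
  exact hs

lemma nonempty_gradedFreeRes_of_betti_ne_zero {I : Ideal (MvPolynomial σ k)} {i j : ℕ}
    (h : betti k σ I i j ≠ 0) : Nonempty (GradedFreeRes k σ I) := by
  obtain ⟨_, F, _⟩ := Nat.nonempty_of_pos_sInf (Nat.pos_of_ne_zero h)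
  exact ⟨F⟩

lemma GradedFreeRes.exists_deg_eq_of_betti_ne_zero {I : Ideal (MvPolynomial σ k)}
    (F : GradedFreeRes k σ I) {i j : ℕ} (h : betti k σ I i j ≠ 0) : ∃ b, F.deg i b = j := by
  have hle : betti k σ I i j ≤ (Finset.univ.filter fun b => F.deg i b = j).card :=
    Nat.sInf_le ⟨F, rfl⟩
  obtain ⟨b, hb⟩ := Finset.card_pos.1 ((Nat.pos_of_ne_zero h).trans_le hle)
  exact ⟨b, (Finset.mem_filter.1 hb).2⟩

/-- The set of all `j - i` with nonvanishing Betti number `β_{i,j}`, whose supremum is `reg`. -/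
def bettiShifts (I : Ideal (MvPolynomial σ k)) : Set ℕ :=
  {r | ∃ i j : ℕ, betti k σ I i j ≠ 0 ∧ r = j - i}

lemma mem_upperBounds_bettiShifts_iff {I : Ideal (MvPolynomial σ k)} {N : ℕ} :
    N ∈ upperBounds (bettiShifts I) ↔ ∀ i j, betti k σ I i j ≠ 0 → j - i ≤ N :=
  ⟨fun h i j hij => h ⟨i, j, hij, rfl⟩, by rintro h _ ⟨i, j, hij, rfl⟩; exact h i j hij⟩

lemma reg_le_iff {I : Ideal (MvPolynomial σ k)} (hI : BddAbove (bettiShifts I)) {N : ℕ} :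
    reg k σ I ≤ N ↔ N ∈ upperBounds (bettiShifts I) :=
  csSup_le_iff' hI

lemma IsMonomialIdeal.bddAbove_bettiShifts {I : Ideal (MvPolynomial σ k)}
    (hI : IsMonomialIdeal k σ I) : BddAbove (bettiShifts I) := by
  by_cases hres : Nonempty (GradedFreeRes k σ I)
  · obtain ⟨n, m, rfl⟩ := hI.exists_eq_span_range hres.some.fg
    refine ⟨(Finset.univ.sup m).degree, mem_upperBounds_bettiShifts_iff.2 fun i j hij => ?_⟩
    obtain ⟨b, rfl⟩ := (monomialResolution m).exists_deg_eq_of_betti_ne_zero hij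
    have hm : ∀ b, (SyzygyStep.ofMonomials k m).deg b ≤ Finset.univ.sup m :=
      fun b => Finset.le_sup (Finset.mem_univ b)
    exact (Nat.sub_le _ _).trans (Finsupp.degree_mono (SyzygyStep.iterate_deg_le hm i b))
  · exact ⟨0, mem_upperBounds_bettiShifts_iff.2 fun _ _ hij =>
      absurd (nonempty_gradedFreeRes_of_betti_ne_zero hij) hres⟩

lemma mem_upperBounds_bettiShifts_iff_of_splitting {I J K L : Ideal (MvPolynomial σ k)}
    (hsplit : ∀ i j : ℕ, betti k σ I i j = betti k σ J i j + betti k σ K i j +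
      (if i = 0 then 0 else betti k σ L (i - 1) j)) {N : ℕ} :
    N ∈ upperBounds (bettiShifts I) ↔ N ∈ upperBounds (bettiShifts J) ∧
      N ∈ upperBounds (bettiShifts K) ∧ N + 1 ∈ upperBounds (bettiShifts L) := by
  simp only [mem_upperBounds_bettiShifts_iff]
  constructor
  · intro h
    refine ⟨fun i j hJ => h i j (by rw [hsplit]; lia), fun i j hK => h i j (by rw [hsplit]; lia),
      fun i j hL => ?_⟩
    have := h (i + 1) j (by rw [hsplit, if_neg i.succ_ne_zero, Nat.add_sub_cancel]; lia)
    lia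
  · rintro ⟨hJ, hK, hL⟩ i j hI
    specialize hJ i j
    specialize hK i j
    specialize hL (i - 1) j
    rw [hsplit] at hI
    split_ifs at hI <;> lia

end Regularity

theorem reg_of_bettiSplitting_general (I J K L : Ideal (MvPolynomial σ k))
    (hI : IsMonomialIdeal k σ I)
    (hsplit : ∀ i j : ℕ, betti k σ I i j = betti k σ J i j + betti k σ K i j +
      (if i = 0 then 0 else betti k σ L (i - 1) j)) :
    reg k σ I = max (reg k σ J) (max (reg k σ K) (reg k σ L - 1)) := by
  obtain ⟨N, hN⟩ := hI.bddAbove_bettiShifts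
  obtain ⟨hJ, hK, hL⟩ := (mem_upperBounds_bettiShifts_iff_of_splitting hsplit).1 hN
  refine eq_of_forall_ge_iff fun M => ?_
  rw [max_le_iff, max_le_iff, Nat.sub_le_iff_le_add, reg_le_iff ⟨N, hN⟩, reg_le_iff ⟨N, hJ⟩,
    reg_le_iff ⟨N, hK⟩, reg_le_iff ⟨N + 1, hL⟩,
    mem_upperBounds_bettiShifts_iff_of_splitting hsplit]

/-- If `I = J + K` is a Betti splitting of the monomial ideal `I`
(minimal generators of `I` are the disjoint union of those of `J` and `K`, and the
Betti numbers split), then `reg I = max {reg J, reg K, reg (J ⊓ K) - 1}`. -/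
theorem reg_of_bettiSplitting
    (I J K : Ideal (MvPolynomial σ k))
    (hImon : IsMonomialIdeal k σ I) (hJmon : IsMonomialIdeal k σ J)
    (hKmon : IsMonomialIdeal k σ K)
    (hsum : I = J ⊔ K)
    (hunion : minGens k σ I = minGens k σ J ∪ minGens k σ K)
    (hdisj : minGens k σ J ∩ minGens k σ K = ∅)
    (hsplit : ∀ i j : ℕ, betti k σ I i j =
      betti k σ J i j + betti k σ K i j +
        (if i = 0 then 0 else betti k σ (J ⊓ K) (i - 1) j)) :
    reg k σ I = max (reg k σ J) (max (reg k σ K) (reg k σ (J ⊓ K) - 1)) := by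
  exact reg_of_bettiSplitting_general k σ I J K (J ⊓ K) hImon hsplit

end PaperReg
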